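/- Let X be an order-3 tensor of dimensions n_1 \times n_2 \times n_3 admitting the rank decomposition X_{ijk} = \sum_{l=1}^r (u_l)_i (v_l)_j (w_l)_k, where the family u_1, \ldots, u_r \in \mathbb{R}^{n_1} is linearly independent and the family v_1, \ldots, v_r \in \mathbb{R}^{n_2} is linearly independent. Let a, b \in \mathbb{R}^{n_3} and suppose \langle w_l, b \rangle \neq 0 for every l = 1, \ldots, r. Then there exists a matrix M \in \mathbb{R}^{n_1 \times n_1} with M \cdot X^3_b = X^3_a, and there exists a matrix N \in \mathbb{R}^{n_2 \times n_2} with X^3_b \cdot N = X^3_a. -/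

import Mathlib

/-! The contraction of a rank decomposition is `X³ₐ = ∑ₗ ⟨wₗ, a⟩ • uₗ vₗᵀ`. As the `uₗ` are linearly
independent, some matrix `M` has each `uₗ` as an eigenvector, with eigenvalue `⟨wₗ, a⟩ / ⟨wₗ, b⟩`;
multiplying `X³_b` on the left by `M` rescales every term to the corresponding one of `X³ₐ`.
Exchanging the first two modes of `X` transposes its contractions, which turns `M` into `N`. -/

open Matrix

section

variable {K R m n p ι : Type*} [Field K] [CommSemiring R]

theorem exists_mulVec_eq_of_linearIndependent [Fintype n] {u : ι → n → K}
    (hu : LinearIndependent K u) (y : ι → m → K) :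
    ∃ M : Matrix m n K, ∀ l, M *ᵥ u l = y l := by
  classical
  obtain ⟨g, hg⟩ :=
    (Finsupp.linearCombination K u).exists_leftInverse_of_injective (LinearMap.ker_eq_bot.mpr hu)
  refine ⟨LinearMap.toMatrix' (Finsupp.linearCombination K y ∘ₗ g), fun l => ?_⟩
  have hgl : g (u l) = Finsupp.single l 1 := by
    simpa using LinearMap.congr_fun hg (Finsupp.single l 1)
  simp [LinearMap.toMatrix'_mulVec, hgl]

/-- The mode-3 contraction `X³ₐ` of an order-3 tensor `X` with a vector `a`; the tensor is encoded
by its entries, so that `X i j` is its `(i, j)` mode-3 fibre. -/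
def modeThreeContraction [Fintype p] (X : m → n → p → R) (a : p → R) : Matrix m n R :=
  Matrix.of fun i j => X i j ⬝ᵥ a

/-- The rank decomposition `X = ∑ₗ uₗ ⊗ vₗ ⊗ wₗ`, written entrywise. The number of terms is not
required to be minimal. -/
def IsRankDecomposition [Fintype ι] (X : m → n → p → R) (u : ι → m → R) (v : ι → n → R)
    (w : ι → p → R) : Prop :=
  ∀ i j k, X i j k = ∑ l, u l i * v l j * w l k

namespace IsRankDecomposition

variable [Fintype ι]

theorem swap {X : m → n → p → R} {u : ι → m → R} {v : ι → n → R} {w : ι → p → R}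
    (hX : IsRankDecomposition X u v w) :
    IsRankDecomposition (fun j i => X i j) v u w := fun j i k => by
  simp only [hX i j k, mul_comm (u _ i)]

variable [Fintype p]

theorem modeThreeContraction_eq_sum
    {X : m → n → p → R} {u : ι → m → R} {v : ι → n → R} {w : ι → p → R}
    (hX : IsRankDecomposition X u v w) (a : p → R) :
    modeThreeContraction X a = ∑ l, (w l ⬝ᵥ a) • vecMulVec (u l) (v l) := by
  ext i j
  have hfibre : X i j = ∑ l, (u l i * v l j) • w l := by
    ext k
    simp [hX i j k]
  simp [modeThreeContraction, hfibre, sum_dotProduct, Matrix.sum_apply, vecMulVec_apply, mul_comm]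

theorem exists_mul_modeThreeContraction_eq [Fintype m]
    {X : m → n → p → K} {u : ι → m → K} {v : ι → n → K} {w : ι → p → K}
    (hX : IsRankDecomposition X u v w) (hu : LinearIndependent K u) {a b : p → K}
    (hab : ∀ l, w l ⬝ᵥ b = 0 → w l ⬝ᵥ a = 0) :
    ∃ M : Matrix m m K, M * modeThreeContraction X b = modeThreeContraction X a := by
  -- If `w l ⬝ᵥ b = 0`, the quotient is the junk value `0`, but then both `l`-th terms vanish.
  obtain ⟨M, hM⟩ :=
    exists_mulVec_eq_of_linearIndependent hu fun l => ((w l ⬝ᵥ a) / (w l ⬝ᵥ b)) • u l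
  refine ⟨M, ?_⟩
  calc M * modeThreeContraction X b
      = ∑ l, (w l ⬝ᵥ b) • vecMulVec (M *ᵥ u l) (v l) := by
        simp only [hX.modeThreeContraction_eq_sum, Matrix.mul_sum, Matrix.mul_smul, mul_vecMulVec]
    _ = ∑ l, (w l ⬝ᵥ a) • vecMulVec (u l) (v l) := by
        simp only [hM, smul_vecMulVec, smul_smul, mul_div_cancel_of_imp' (hab _)]
    _ = modeThreeContraction X a := (hX.modeThreeContraction_eq_sum a).symm

end IsRankDecomposition

theorem leurgans_exists_transfer_matrices_general [Fintype m] [Fintype n] [Fintype p] [Fintype ι]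
    {X : m → n → p → K} {u : ι → m → K} {v : ι → n → K} {w : ι → p → K}
    (hX : IsRankDecomposition X u v w) {a b : p → K}
    (hab : ∀ l, w l ⬝ᵥ b = 0 → w l ⬝ᵥ a = 0) :
    (LinearIndependent K u →
      ∃ M : Matrix m m K, M * modeThreeContraction X b = modeThreeContraction X a) ∧
    (LinearIndependent K v →
      ∃ N : Matrix n n K, modeThreeContraction X b * N = modeThreeContraction X a) := by
  refine ⟨fun hu => hX.exists_mul_modeThreeContraction_eq hu hab, fun hv => ?_⟩
  obtain ⟨M, hM⟩ := hX.swap.exists_mul_modeThreeContraction_eq hv hab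
  have hMt : M * (modeThreeContraction X b)ᵀ = (modeThreeContraction X a)ᵀ := hM
  exact ⟨Mᵀ, by simpa [transpose_mul] using congrArg transpose hMt⟩

end

/-- Existence of matrices `M`, `N` with `M · X³_b = X³ₐ` and `X³_b · N = X³ₐ`,
under linear independence of the factors and non-degeneracy `⟨wₗ, b⟩ ≠ 0`. -/
theorem leurgans_exists_transfer_matrices {n₁ n₂ n₃ r : ℕ}
    (X : Fin n₁ → Fin n₂ → Fin n₃ → ℝ)
    (u : Fin r → Fin n₁ → ℝ) (v : Fin r → Fin n₂ → ℝ) (w : Fin r → Fin n₃ → ℝ)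
    (hX : ∀ i j k, X i j k = ∑ l, u l i * v l j * w l k)
    (hu : LinearIndependent ℝ u) (hv : LinearIndependent ℝ v)
    (a b : Fin n₃ → ℝ) (hb : ∀ l, (∑ k, w l k * b k) ≠ 0) :
    (∃ M : Matrix (Fin n₁) (Fin n₁) ℝ,
      M * (Matrix.of fun i j => ∑ k, X i j k * b k)
        = (Matrix.of fun i j => ∑ k, X i j k * a k)) ∧
    (∃ N : Matrix (Fin n₂) (Fin n₂) ℝ,
      (Matrix.of fun i j => ∑ k, X i j k * b k) * N
        = (Matrix.of fun i j => ∑ k, X i j k * a k)) := by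
  obtain ⟨hM, hN⟩ := leurgans_exists_transfer_matrices_general hX (a := a) fun l h =>
    absurd h (hb l)
  exact ⟨hM hu, hN hv⟩
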